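/- Let b be a prime and t ≥ 0 an integer, let D_1, D_2 be generating matrices of a digital (0,2)-sequence over F_b, and let E_1, E_2 be defined by E_1(i,r) = 0 for r ≤ t, E_1(i,r) = D_1(i, r − t) for r > t, and E_2(i,r) = D_2(i,r) for i ≤ t, r ≤ t, E_2(i,r) = 0 for i ≤ t, r > t, E_2(i,r) = 0 for i > t, r ≤ t, E_2(i,r) = D_2(i − t, r − t) for i > t, r > t. Let m ≥ t, let w_1 = 0 and let w_2 be an integer with 0 ≤ w_2 ≤ t and m − w_2 − t ≥ 0. Let Ẽ_1^{(m)} = E_1^{(m)} and let Ẽ_2^{(m)} be the column reduction of E_2^{(m)} with reduction index w_2. Then ρ_m(Ẽ_1^{(m)}, Ẽ_2^{(m)}) = m − t. -/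

import Mathlib

open Finset

/-- The family consisting of the first `d j` rows of each of the matrices `C j`
(a row index `≥ m` yields the zero vector). -/
def rowFamily {b s m : ℕ} (C : Fin s → Matrix (Fin m) (Fin m) (ZMod b))
    (d : Fin s → ℕ) : (Σ j : Fin s, Fin (d j)) → (Fin m → ZMod b) :=
  fun p r => if h : (p.2 : ℕ) < m then C p.1 ⟨(p.2 : ℕ), h⟩ r else 0

/-- The first `d j` rows of the matrices `C j` are linearly independent over `𝔽_b`. -/
def RowsLI {b s m : ℕ} (C : Fin s → Matrix (Fin m) (Fin m) (ZMod b))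
    (d : Fin s → ℕ) : Prop :=
  LinearIndependent (ZMod b) (rowFamily C d)

/-- The linear independence parameter `ρ_m(C_1, …, C_s)`: the largest `ρ` such that for
every choice of nonnegative integers `d_1 + ⋯ + d_s = ρ`, the corresponding first rows
of the matrices are linearly independent. -/
noncomputable def rho {b s m : ℕ} (C : Fin s → Matrix (Fin m) (Fin m) (ZMod b)) : ℕ :=
  sSup {ρ : ℕ | ∀ d : Fin s → ℕ, ∑ j, d j = ρ → RowsLI C d}

/-- Left upper `k × k` submatrix of an infinite matrix. -/
def upperLeft {b : ℕ} (C : Matrix ℕ ℕ (ZMod b)) (k : ℕ) :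
    Matrix (Fin k) (Fin k) (ZMod b) :=
  Matrix.of fun i r => C (i : ℕ) (r : ℕ)

/-- Column reduction with reduction index `w`: the first `m - min m w` columns are kept,
the last `min m w` columns are set to zero. -/
def colReduce {b m : ℕ} (C : Matrix (Fin m) (Fin m) (ZMod b)) (w : ℕ) :
    Matrix (Fin m) (Fin m) (ZMod b) :=
  Matrix.of fun i r => if (r : ℕ) < m - min m w then C i r else 0

/-- `C` is a family of generating matrices of a digital `(t,s)`-sequence over `𝔽_b`. -/
def IsDigitalSeq {b s : ℕ} (C : Fin s → Matrix ℕ ℕ (ZMod b)) (t : ℕ) : Prop :=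
  ∀ k : ℕ, max t 1 ≤ k → k - t ≤ rho (fun j => upperLeft (C j) k)

theorem rowsLI_iff_aux {b m : ℕ} (M : Fin 2 → Matrix ℕ ℕ (ZMod b)) (d : Fin 2 → ℕ)
    (hd : ∀ j, d j ≤ m) :
    RowsLI (fun j => upperLeft (M j) m) d ↔
      ∀ f : Fin 2 → ℕ → ZMod b,
        (∀ r < m, ∑ i ∈ range (d 0), f 0 i * M 0 i r + ∑ i ∈ range (d 1), f 1 i * M 1 i r = 0) →
        ∀ j, ∀ i < d j, f j i = 0 := by
  have key : ∀ (p : Σ j : Fin 2, Fin (d j)) (r : Fin m),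
      rowFamily (fun j => upperLeft (M j) m) d p r = M p.1 p.2 r := by
    intro p r
    have h : (p.2 : ℕ) < m := lt_of_lt_of_le p.2.2 (hd p.1)
    simp [rowFamily, upperLeft, h]
  unfold RowsLI
  rw [Fintype.linearIndependent_iff]
  have sumEq : ∀ (f : Fin 2 → ℕ → ZMod b) (r : Fin m),
      (∑ p : Σ j : Fin 2, Fin (d j), f p.1 p.2 • rowFamily (fun j => upperLeft (M j) m) d p) r
      = ∑ i ∈ range (d 0), f 0 i * M 0 i r + ∑ i ∈ range (d 1), f 1 i * M 1 i r := by
    intro f r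
    rw [Finset.sum_apply]
    simp only [Pi.smul_apply, smul_eq_mul, key]
    rw [Fintype.sum_sigma, Fin.sum_univ_two, Finset.sum_range, Finset.sum_range]
  constructor
  · intro H f hf j i hi
    refine H (fun p => f p.1 p.2) ?_ ⟨j, ⟨i, hi⟩⟩
    funext r
    rw [sumEq f r]
    exact hf r r.2
  · intro H g hg p
    let f : Fin 2 → ℕ → ZMod b := fun j i => if h : i < d j then g ⟨j, ⟨i, h⟩⟩ else 0
    have hfg : ∀ p : Σ j : Fin 2, Fin (d j), f p.1 p.2 = g p := by
      rintro ⟨j, i⟩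
      simp [f]
    rw [← hfg]
    refine H f ?_ p.1 p.2 p.2.2
    intro r hr
    rw [← sumEq f ⟨r, hr⟩]
    simp only [hfg]
    rw [hg]
    rfl

theorem li_aux {b : ℕ} (D : Fin 2 → Matrix ℕ ℕ (ZMod b))
    (hD : ∀ k : ℕ, 1 ≤ k → rho (fun j => upperLeft (D j) k) = k)
    (k n₀ n₁ : ℕ) (hn : n₀ + n₁ ≤ k) (f g : ℕ → ZMod b)
    (h : ∀ r < k, ∑ i ∈ range n₀, f i * D 0 i r + ∑ i ∈ range n₁, g i * D 1 i r = 0) :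
    (∀ i < n₀, f i = 0) ∧ (∀ i < n₁, g i = 0) := by
  rcases Nat.eq_zero_or_pos k with rfl | hk
  · constructor <;> intro i hi <;> omega
  have h1 := hD k hk
  unfold rho at h1
  set S := {ρ : ℕ | ∀ d : Fin 2 → ℕ, ∑ j, d j = ρ → RowsLI (fun j => upperLeft (D j) k) d} with hS
  have hne : S.Nonempty := by
    by_contra hc
    rw [Set.not_nonempty_iff_eq_empty] at hc
    rw [hc] at h1
    simp at h1
    omega
  have hbd : BddAbove S := by
    by_contra hc
    rw [Nat.sSup_of_not_bddAbove hc] at h1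
    omega
  have hmem := Nat.sSup_mem hne hbd
  rw [h1] at hmem
  have hli := hmem ![k - n₁, n₁] (by simp; omega)
  rw [rowsLI_iff_aux D _ (by intro j; fin_cases j <;> simp; omega)] at hli
  have h2 := hli ![fun i => if i < n₀ then f i else 0, g] (by
    intro r hr
    refine Eq.trans ?_ (h r hr)
    simp only [Matrix.cons_val_zero, Matrix.cons_val_one]
    congr 1
    symm
    have hsub : range n₀ ⊆ range (k - n₁) := by
      intro i; simp only [Finset.mem_range]; omega
    rw [← Finset.sum_subset hsub]
    · refine Finset.sum_congr rfl ?_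
      intro i hi
      rw [if_pos (Finset.mem_range.1 hi)]
    · intro i _ hi
      rw [if_neg (by simpa using hi), zero_mul])
  constructor
  · intro i hi
    have := h2 0 i (by simp; omega)
    simpa [hi] using this
  · intro i hi
    simpa using h2 1 i (by simpa using hi)

theorem upper_aux {b t m ρ : ℕ} [Fact b.Prime] (C : Fin 2 → Matrix (Fin m) (Fin m) (ZMod b))
    (hC : ∀ i r : Fin m, (r : ℕ) < t → C 0 i r = 0)
    (h : RowsLI C ![ρ, 0]) : ρ ≤ m - t := by
  let v : Fin ρ → (Fin m → ZMod b) := fun i => rowFamily C ![ρ, 0] ⟨0, i⟩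
  have hv : LinearIndependent (ZMod b) v :=
    LinearIndependent.comp h (fun i : Fin ρ => (⟨0, i⟩ : Σ j : Fin 2, Fin ((![ρ, 0] : Fin 2 → ℕ) j)))
      (by
        intro i j hij
        exact eq_of_heq (Sigma.mk.inj hij).2)
  let L : (Fin (m - t) → ZMod b) →ₗ[ZMod b] (Fin m → ZMod b) :=
    LinearMap.pi fun r => if h : t ≤ (r : ℕ) then LinearMap.proj ⟨r - t, by omega⟩ else 0
  let u : Fin ρ → (Fin (m - t) → ZMod b) := fun i r => v i ⟨r + t, by omega⟩
  have hLu : v = L ∘ u := by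
    funext i r
    simp only [L, u, Function.comp, LinearMap.pi_apply]
    split_ifs with hr
    · simp only [LinearMap.proj_apply]
      congr 1
      ext
      simp
      omega
    · simp only [v, rowFamily, LinearMap.zero_apply]
      split_ifs with hi
      · exact hC _ _ (by omega)
      · rfl
  rw [hLu] at hv
  have := (LinearIndependent.of_comp L hv).fintype_card_le_finrank
  simpa using this

/-- Remark 3, Case 2 (`max {t, w_2} = t`): for the strict `(t,2)`-sequence `E_1, E_2`
and reduction indices `w_1 = 0` and `0 ≤ w_2 ≤ t` with `m - w_2 - t ≥ 0`, one has
`ρ_m(Ẽ_1^{(m)}, Ẽ_2^{(m)}) = m - t`. -/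
theorem strict_seq_reduced_rho_case_t {b t m w₂ : ℕ} (hb : b.Prime)
    (D E : Fin 2 → Matrix ℕ ℕ (ZMod b))
    (hD : ∀ k : ℕ, 1 ≤ k → rho (fun j => upperLeft (D j) k) = k)
    (hE1 : ∀ i r : ℕ, E 0 i r = if r < t then 0 else D 0 i (r - t))
    (hE2 : ∀ i r : ℕ, E 1 i r =
      if i < t then (if r < t then D 1 i r else 0)
      else (if r < t then 0 else D 1 (i - t) (r - t)))
    (hm : t ≤ m) (hw : w₂ + t ≤ m) (hwt : w₂ ≤ t) :
    rho ![upperLeft (E 0) m, colReduce (upperLeft (E 1) m) w₂] = m - t := by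
  have : Fact b.Prime := ⟨hb⟩
  let M : Fin 2 → Matrix ℕ ℕ (ZMod b) :=
    ![E 0, Matrix.of fun i r => if r < m - w₂ then E 1 i r else 0]
  have hM : ![upperLeft (E 0) m, colReduce (upperLeft (E 1) m) w₂]
      = fun j => upperLeft (M j) m := by
    have hmin : min m w₂ = w₂ := by omega
    funext j
    fin_cases j
    · rfl
    · ext i r
      simp [M, colReduce, upperLeft, hmin]
  rw [hM]
  unfold rho
  refine IsGreatest.csSup_eq ⟨?_, ?_⟩
  · intro d hd
    rw [Fin.sum_univ_two] at hd
    rw [rowsLI_iff_aux M d (by intro j; fin_cases j <;> simp <;> omega : ∀ j, d j ≤ m)]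
    intro f hf
    have hM0 : ∀ i r, M 0 i r = E 0 i r := fun i r => rfl
    have hM1 : ∀ i r, M 1 i r = if r < m - w₂ then E 1 i r else 0 := fun i r => rfl
    simp only [hM0, hM1] at hf
    have low : ∀ i < min (d 1) t, f 1 i = 0 := by
      refine (li_aux D hD t 0 (min (d 1) t) (by omega) (f 0) (f 1) ?_).2
      intro r hr
      have h1 := hf r (by omega)
      rw [← h1]
      congr 1
      · rw [Finset.range_zero, Finset.sum_empty]
        symm
        refine Finset.sum_eq_zero fun i _ => ?_
        rw [hE1, if_pos hr, mul_zero]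
      · have hsub : range (min (d 1) t) ⊆ range (d 1) := by
          intro i; simp only [Finset.mem_range]; omega
        rw [← Finset.sum_subset hsub]
        · refine Finset.sum_congr rfl fun i hi => ?_
          have hi' := Finset.mem_range.1 hi
          rw [if_pos (by omega), hE2, if_pos (by omega), if_pos hr]
        · intro i hi hi'
          simp only [Finset.mem_range] at hi hi'
          rw [if_pos (by omega), hE2, if_neg (by omega), if_pos hr, mul_zero]
    have shift : ∀ r, r + t < m → r + t < m - w₂ ∨ d 1 ≤ t →
        ∑ i ∈ range (d 0), f 0 i * D 0 i r
          + ∑ i ∈ range (d 1 - t), f 1 (i + t) * D 1 i r = 0 := by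
      intro r hr hr'
      rw [← hf (r + t) hr]
      congr 1
      · refine Finset.sum_congr rfl fun i _ => ?_
        rw [hE1, if_neg (by omega), Nat.add_sub_cancel]
      · rcases le_or_gt (d 1) t with hdt | hdt
        · rw [Nat.sub_eq_zero_of_le hdt, Finset.range_zero, Finset.sum_empty]
          symm
          refine Finset.sum_eq_zero fun i hi => ?_
          have hi' := Finset.mem_range.1 hi
          rw [low i (by omega), zero_mul]
        · have e : d 1 = t + (d 1 - t) := by omega
          conv_rhs => rw [e]
          rw [Finset.sum_range_add]
          rw [Finset.sum_eq_zero (s := range t), zero_add]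
          · refine Finset.sum_congr rfl fun i hi => ?_
            rw [if_pos (by omega), hE2, if_neg (by omega), if_neg (by omega),
              Nat.add_sub_cancel, Nat.add_sub_cancel_left, add_comm t i]
          · intro i hi
            have hi' := Finset.mem_range.1 hi
            rw [low i (by omega), zero_mul]
    have high : (∀ i < d 0, f 0 i = 0) ∧ (∀ i < d 1 - t, f 1 (i + t) = 0) := by
      rcases le_or_gt (d 1) t with hdt | hdt
      · exact li_aux D hD (m - t) (d 0) (d 1 - t) (by omega) (f 0) (fun i => f 1 (i + t))
          (fun r hr => shift r (by omega) (Or.inr hdt))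
      · exact li_aux D hD (m - t - w₂) (d 0) (d 1 - t) (by omega) (f 0) (fun i => f 1 (i + t))
          (fun r hr => shift r (by omega) (Or.inl (by omega)))
    intro j i hi
    fin_cases j
    · exact high.1 i hi
    · simp only [Fin.mk_one, Fin.isValue] at hi ⊢
      rcases lt_or_ge i t with hit | hit
      · exact low i (by omega)
      · have := high.2 (i - t) (by omega)
        rwa [Nat.sub_add_cancel hit] at this
  · intro ρ hρ
    refine upper_aux (fun j => upperLeft (M j) m) ?_ (hρ ![ρ, 0] (by simp))
    intro i r hr
    show E 0 i r = 0
    rw [hE1, if_pos hr]
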